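/- arXiv:2412.03463 — 3 statements merged into one kernel-verified Lean document; each statement's English description precedes it below -/
import Mathlib

section
/- If G is any (not necessarily connected) claw-free finite simple graph, then Z_+(G) = Z(G). -/
open SimpleGraph

/-- The standard color change rule: a blue vertex `u ∈ S` with exactly one white
neighbor `v` can force `v` to become blue. -/
def StdStep {V : Type*} (G : SimpleGraph V) (S : Set V) (u v : V) : Prop :=
  u ∈ S ∧ v ∉ S ∧ G.Adj u v ∧ ∀ w : V, G.Adj u w → w ∉ S → w = v

/-- The positive semidefinite color change rule: a blue vertex `u ∈ S` can force a
white vertex `v` if `v` is the unique neighbor of `u` in the connected component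
containing `v` of the subgraph induced on the white vertices `Sᶜ`. -/
def PSDStep {V : Type*} (G : SimpleGraph V) (S : Set V) (u v : V) : Prop :=
  u ∈ S ∧ G.Adj u v ∧ ∃ hv : v ∈ (Sᶜ : Set V),
    ∀ w : V, ∀ hw : w ∈ (Sᶜ : Set V), G.Adj u w →
      (G.induce (Sᶜ : Set V)).Reachable ⟨v, hv⟩ ⟨w, hw⟩ → w = v

/-- `Derives step B S` means the blue set `S` is obtainable from the initial blue
set `B` by iterated application of the color change rule `step`. -/
inductive Derives {V : Type*} (step : Set V → V → V → Prop) : Set V → Set V → Prop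
  | refl (S : Set V) : Derives step S S
  | tail {S T : Set V} {u v : V} : Derives step S T → step T u v → Derives step S (insert v T)

/-- `B` is a standard zero forcing set of `G` if iterating the standard color
change rule from `B` colors all vertices blue. -/
def IsStdForcingSet {V : Type*} (G : SimpleGraph V) (B : Set V) : Prop :=
  Derives (StdStep G) B Set.univ

/-- `B` is a positive semidefinite zero forcing set of `G` if iterating the
positive semidefinite color change rule from `B` colors all vertices blue. -/
def IsPSDForcingSet {V : Type*} (G : SimpleGraph V) (B : Set V) : Prop :=
  Derives (PSDStep G) B Set.univ

/-- The standard zero forcing number `Z(G)`. -/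
noncomputable def Z {V : Type*} (G : SimpleGraph V) : ℕ :=
  sInf {n : ℕ | ∃ B : Set V, IsStdForcingSet G B ∧ B.ncard = n}

/-- The positive semidefinite zero forcing number `Z₊(G)`. -/
noncomputable def Zplus {V : Type*} (G : SimpleGraph V) : ℕ :=
  sInf {n : ℕ | ∃ B : Set V, IsPSDForcingSet G B ∧ B.ncard = n}

/-- A graph is claw-free if no induced subgraph is isomorphic to `K_{1,3}`. -/
def ClawFree {V : Type*} (G : SimpleGraph V) : Prop :=
  ¬ ∃ s : Set V, Nonempty (G.induce s ≃g completeBipartiteGraph (Fin 1) (Fin 3))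

/-- `S` is a minimum positive semidefinite zero forcing set of `G`. -/
def IsMinPSDForcingSet {V : Type*} (G : SimpleGraph V) (S : Set V) : Prop :=
  IsPSDForcingSet G S ∧ ∀ B : Set V, IsPSDForcingSet G B → S.ncard ≤ B.ncard

/-!
In a claw-free graph, deleting from a connected set `C` a vertex which is the unique neighbor in `C`
of some vertex outside `C` leaves it connected, since a claw would otherwise appear at the deleted
vertex. Hence, once the white vertices induce a connected subgraph, they do so forever, and positive
semidefinite forcing is the same as standard forcing.

To reach this situation, exchange the two ends of a force `t → v` into a white component: coloring
`v` blue and `t` white again gives a positive semidefinite forcing set of the same size. Choose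
among the sets of this size one with a white component `K` that is maximal under inclusion. If a
blue vertex saw both `K` and another white component, then successive exchanges into that component
would eventually turn a neighbor of `K` white and enlarge `K`. So the blue vertices around `K` have
no further white neighbors, and one can delete the closed neighborhood of `K` and argue by induction
on the number of vertices: in the original graph, first force outside the closed neighborhood of `K`
with all vertices of its boundary blue, and then force the connected set `K`.
-/

section

variable {V : Type*} {G : SimpleGraph V}

/-! ### Components of induced subgraphs -/

/-- `X` is a union of connected components of the subgraph of `G` induced on `W`. These are sets in
`V` rather than families of `SimpleGraph.ConnectedComponent`s because `W`, the white set, varies. -/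
structure IsComponentUnion (G : SimpleGraph V) (W X : Set V) : Prop where
  subset : X ⊆ W
  mem_of_adj : ∀ ⦃x y : V⦄, x ∈ X → y ∈ W → G.Adj x y → y ∈ X

/-- `K` is the vertex set of a connected component of the subgraph of `G` induced on `W`. -/
structure IsComponent (G : SimpleGraph V) (W K : Set V) : Prop extends IsComponentUnion G W K where
  connected : (G.induce K).Connected

/-- `v` is the unique neighbor of `u` in `X`. Taking for `X` the white set, or a union of
components of it, gives the condition for `u` to force `v` under the two color change rules. -/
structure UniqueNeighbor (G : SimpleGraph V) (X : Set V) (u v : V) : Prop where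
  mem : v ∈ X
  adj : G.Adj u v
  eq_of_adj : ∀ ⦃w : V⦄, w ∈ X → G.Adj u w → w = v

theorem UniqueNeighbor.anti {X Y : Set V} {u v : V} (h : UniqueNeighbor G X u v) (hYX : Y ⊆ X)
    (hv : v ∈ Y) : UniqueNeighbor G Y u v :=
  ⟨hv, h.adj, fun _ hw => h.eq_of_adj (hYX hw)⟩

theorem isComponentUnion_self (G : SimpleGraph V) (W : Set V) : IsComponentUnion G W W :=
  ⟨subset_rfl, fun _ _ _ hy _ => hy⟩

theorem IsComponentUnion.inter {W U X : Set V} (hX : IsComponentUnion G W X) (hUW : U ⊆ W) :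
    IsComponentUnion G U (X ∩ U) :=
  ⟨Set.inter_subset_right, fun _ _ hx hy hxy => ⟨hX.mem_of_adj hx.1 (hUW hy) hxy, hy⟩⟩

theorem IsComponentUnion.trans {W X Y : Set V} (hX : IsComponentUnion G W X)
    (hY : IsComponentUnion G X Y) : IsComponentUnion G W Y :=
  ⟨hY.subset.trans hX.subset, fun _ _ hx hy hxy =>
    hY.mem_of_adj hx (hX.mem_of_adj (hY.subset hx) hy hxy) hxy⟩

theorem IsComponentUnion.mem_of_reachable {W X : Set V} (hX : IsComponentUnion G W X) {x y : W}
    (hx : (x : V) ∈ X) (hxy : (G.induce W).Reachable x y) : (y : V) ∈ X := by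
  obtain ⟨p⟩ := hxy
  induction p with
  | nil => exact hx
  | cons hadj _ ih => exact ih (hX.mem_of_adj hx (Subtype.coe_prop _) hadj)

theorem isComponentUnion_setOf_reachable (G : SimpleGraph V) {W : Set V} (w : W) :
    IsComponentUnion G W {x | ∃ hx : x ∈ W, (G.induce W).Reachable w ⟨x, hx⟩} where
  subset := fun _ hx => hx.1
  mem_of_adj := fun x y ⟨hx, hwx⟩ hy hxy =>
    ⟨hy, hwx.trans (Adj.reachable (show (G.induce W).Adj ⟨x, hx⟩ ⟨y, hy⟩ from hxy))⟩

theorem preconnected_induce_iff_forall_isComponentUnion {W : Set V} :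
    (G.induce W).Preconnected ↔ ∀ X, IsComponentUnion G W X → X.Nonempty → W ⊆ X := by
  constructor
  · rintro hW X hX ⟨x, hx⟩ y hy
    exact hX.mem_of_reachable hx (hW ⟨x, hX.subset hx⟩ ⟨y, hy⟩)
  · intro h x y
    obtain ⟨_, hxy⟩ := h _ (isComponentUnion_setOf_reachable G x) ⟨x, x.2, .rfl⟩ y.2
    exact hxy

theorem IsComponentUnion.subset_of_preconnected {W X Y : Set V} (hX : IsComponentUnion G W X)
    (hYW : Y ⊆ W) (hY : (G.induce Y).Preconnected) (hXY : (X ∩ Y).Nonempty) : Y ⊆ X :=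
  (preconnected_induce_iff_forall_isComponentUnion.1 hY _ (hX.inter hYW) hXY).trans
    Set.inter_subset_left

theorem exists_mem_isComponent (G : SimpleGraph V) {W : Set V} {w : V} (hw : w ∈ W) :
    ∃ K, w ∈ K ∧ IsComponent G W K := by
  have hK := isComponentUnion_setOf_reachable G ⟨w, hw⟩
  have hwK : w ∈ {x | ∃ hx : x ∈ W, (G.induce W).Reachable ⟨w, hw⟩ ⟨x, hx⟩} := ⟨hw, .rfl⟩
  refine ⟨_, hwK, hK, (connected_iff _).2 ⟨?_, ⟨w, hwK⟩⟩⟩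
  refine preconnected_induce_iff_forall_isComponentUnion.2 ?_
  rintro X hX ⟨x, hx⟩ y ⟨_, hwy⟩
  obtain ⟨_, hwx⟩ := hX.subset hx
  exact (hK.trans hX).mem_of_reachable hx (hwx.symm.trans hwy)

theorem IsComponent.disjoint_of_mem {W K C : Set V} (hK : IsComponent G W K)
    (hC : IsComponent G W C) {y : V} (hyC : y ∈ C) (hyK : y ∉ K) : Disjoint K C := by
  rw [Set.disjoint_iff_inter_eq_empty, ← Set.not_nonempty_iff_eq_empty]
  exact fun h => hyK (hK.subset_of_preconnected hC.subset hC.connected.preconnected h hyC)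

theorem exists_isComponent_ssuperset {W K : Set V} (hKW : K ⊆ W)
    (hK : (G.induce K).Preconnected) {t k : V} (htW : t ∈ W) (htK : t ∉ K) (hk : k ∈ K)
    (htk : G.Adj t k) : ∃ K', IsComponent G W K' ∧ K ⊂ K' := by
  obtain ⟨K', htK', hK'⟩ := exists_mem_isComponent G htW
  have hkK' : k ∈ K' := hK'.mem_of_adj htK' (hKW hk) htk
  exact ⟨K', hK', hK'.subset_of_preconnected hKW hK ⟨k, hkK', hk⟩, fun h => htK (h htK')⟩

theorem preconnected_induce_sdiff_singleton {W : Set V} (hW : (G.induce W).Preconnected) {v : V}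
    (hv : v ∈ W) (hclique : G.IsClique (G.neighborSet v ∩ W)) :
    (G.induce (W \ {v})).Preconnected := by
  refine preconnected_induce_iff_forall_isComponentUnion.2 fun X hX hne => ?_
  rw [preconnected_induce_iff_forall_isComponentUnion] at hW
  by_cases hvX : ∃ a ∈ X, G.Adj v a
  · obtain ⟨a, haX, hva⟩ := hvX
    have hnbr : ∀ b ∈ W \ {v}, G.Adj v b → b ∈ X := fun b hb hvb => by
      by_cases hab : a = b
      · exact hab ▸ haX
      · exact hX.mem_of_adj haX hb (hclique ⟨hva, (hX.subset haX).1⟩ ⟨hvb, hb.1⟩ hab)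
    have hins : IsComponentUnion G W (insert v X) := by
      refine ⟨Set.insert_subset hv fun x hx => (hX.subset hx).1, fun x y hx hy hxy => ?_⟩
      by_cases hyv : y = v
      · exact Or.inl hyv
      · rcases hx with rfl | hx
        · exact Or.inr (hnbr y ⟨hy, hyv⟩ hxy)
        · exact Or.inr (hX.mem_of_adj hx ⟨hy, hyv⟩ hxy)
    exact Set.sdiff_singleton_subset_iff.2 (hW _ hins ⟨v, Or.inl rfl⟩)
  · have hXW : IsComponentUnion G W X := by
      refine ⟨fun x hx => (hX.subset hx).1, fun x y hx hy hxy => hX.mem_of_adj hx ⟨hy, ?_⟩ hxy⟩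
      rintro rfl
      exact hvX ⟨x, hx, hxy.symm⟩
    exact Set.sdiff_subset.trans (hW X hXW hne)

/-! ### Claw-free graphs -/

theorem clawFree_iff_not_isIndContained :
    ClawFree G ↔ ¬ (completeBipartiteGraph (Fin 1) (Fin 3)).IsIndContained G := by
  rw [ClawFree, isIndContained_iff_exists_iso_induce]
  exact not_congr (exists_congr fun _ => ⟨Nonempty.map Iso.symm, Nonempty.map Iso.symm⟩)

theorem ClawFree.induce (hG : ClawFree G) (W : Set V) : ClawFree (G.induce W) := by
  rw [clawFree_iff_not_isIndContained] at hG ⊢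
  exact fun h => hG (h.trans (Embedding.induce W).isIndContained)

theorem ClawFree.adj_or_adj_or_adj (hG : ClawFree G) {c x y z : V} (hx : G.Adj c x)
    (hy : G.Adj c y) (hz : G.Adj c z) (hxy : x ≠ y) (hxz : x ≠ z) (hyz : y ≠ z) :
    G.Adj x y ∨ G.Adj x z ∨ G.Adj y z := by
  by_contra! hnot
  obtain ⟨nxy, nxz, nyz⟩ := hnot
  let f : Fin 1 ⊕ Fin 3 → V := Sum.elim (fun _ => c) ![x, y, z]
  have hleaf : Function.Injective ![x, y, z] := by
    intro i j hij
    fin_cases i <;> fin_cases j <;> simp_all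
  have hcenter : ∀ i, G.Adj c (![x, y, z] i) := by
    intro i
    fin_cases i <;> simp [hx, hy, hz]
  have hindep : ∀ i j, ¬ G.Adj (![x, y, z] i) (![x, y, z] j) := by
    intro i j
    fin_cases i <;> fin_cases j <;> simp [nxy, nxz, nyz, G.adj_comm y x, G.adj_comm z]
  have hf : Function.Injective f :=
    (Function.injective_of_subsingleton _).sumElim hleaf fun _ i => (hcenter i).ne
  refine clawFree_iff_not_isIndContained.1 hG ⟨⟨f, hf⟩, ?_⟩
  rintro (i | i) (j | j) <;> simp [f, hcenter, hindep, (hcenter _).symm]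

theorem ClawFree.preconnected_induce_sdiff_of_uniqueNeighbor (hG : ClawFree G) {C : Set V}
    (hC : (G.induce C).Preconnected) {t v : V} (ht : t ∉ C) (hv : UniqueNeighbor G C t v) :
    (G.induce (C \ {v})).Preconnected := by
  refine preconnected_induce_sdiff_singleton hC hv.mem ?_
  rintro a ⟨hva, ha⟩ b ⟨hvb, hb⟩ hab
  have htn : ∀ {w}, w ∈ C → G.Adj v w → t ≠ w ∧ ¬ G.Adj t w := fun hw hvw =>
    ⟨fun h => ht (h ▸ hw), fun h => hvw.ne (hv.eq_of_adj hw h).symm⟩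
  obtain h | h | h :=
    hG.adj_or_adj_or_adj hv.adj.symm hva hvb (htn ha hva).1 (htn hb hvb).1 hab
  · exact absurd h (htn ha hva).2
  · exact absurd h (htn hb hvb).2
  · exact h

/-! ### Forcing -/

theorem Derives.imp {step step' : Set V → V → V → Prop} {B T : Set V} (h : Derives step B T)
    (himp : ∀ S u v, step S u v → step' S u v) : Derives step' B T := by
  induction h with
  | refl => exact .refl _
  | tail _ hstep ih => exact .tail ih (himp _ _ _ hstep)

theorem Derives.exists_step {step : Set V → V → V → Prop} {B T S : Set V} (h : Derives step B T)
    (hpersist : ∀ ⦃T S u v⦄, step T u v → T ⊆ S → v ∉ S → step S u v) (hBS : B ⊆ S)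
    (hTS : ¬ T ⊆ S) : ∃ u v, step S u v := by
  induction h with
  | refl => exact absurd hBS hTS
  | @tail T u v _ hstep ih =>
    by_cases hT : T ⊆ S
    · exact ⟨u, v, hpersist hstep hT fun hv => hTS (Set.insert_subset hv hT)⟩
    · exact ih hT

theorem derives_univ_of_forall_exists_step [Finite V] {step : Set V → V → V → Prop}
    (hnew : ∀ ⦃S u v⦄, step S u v → v ∉ S) {B : Set V}
    (h : ∀ S, B ⊆ S → S ≠ Set.univ → ∃ u v, step S u v) : Derives step B Set.univ := by
  obtain ⟨S, hS⟩ := Set.Finite.exists_maximal (Set.toFinite {S | B ⊆ S ∧ Derives step B S})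
    ⟨B, subset_rfl, .refl B⟩
  by_cases huniv : S = Set.univ
  · exact huniv ▸ hS.prop.2
  obtain ⟨u, v, hstep⟩ := h S hS.prop.1 huniv
  exact absurd (Set.ssubset_insert (hnew hstep))
    (hS.not_gt ⟨hS.prop.1.trans (Set.subset_insert v S), .tail hS.prop.2 hstep⟩)

theorem stdStep_iff {S : Set V} {u v : V} :
    StdStep G S u v ↔ u ∈ S ∧ UniqueNeighbor G Sᶜ u v :=
  ⟨fun ⟨hu, hv, huv, huniq⟩ => ⟨hu, hv, huv, fun w hw huw => huniq w huw hw⟩,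
    fun ⟨hu, h⟩ => ⟨hu, h.mem, h.adj, fun _ huw hw => h.eq_of_adj hw huw⟩⟩

theorem psdStep_iff {S : Set V} {u v : V} :
    PSDStep G S u v ↔
      u ∈ S ∧ ∃ X, IsComponentUnion G Sᶜ X ∧ UniqueNeighbor G X u v := by
  constructor
  · rintro ⟨hu, huv, hv, huniq⟩
    exact ⟨hu, _, isComponentUnion_setOf_reachable G ⟨v, hv⟩, ⟨hv, .rfl⟩, huv,
      fun w ⟨hw, hvw⟩ huw => huniq w hw huw hvw⟩
  · rintro ⟨hu, X, hX, h⟩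
    exact ⟨hu, h.adj, hX.subset h.mem,
      fun w hw huw hvw => h.eq_of_adj (hX.mem_of_reachable h.mem hvw) huw⟩

theorem StdStep.psdStep {S : Set V} {u v : V} (h : StdStep G S u v) : PSDStep G S u v :=
  psdStep_iff.2 ⟨h.1, Sᶜ, isComponentUnion_self G Sᶜ, (stdStep_iff.1 h).2⟩

theorem PSDStep.stdStep {S : Set V} {u v : V} (h : PSDStep G S u v)
    (hS : (G.induce Sᶜ).Preconnected) : StdStep G S u v :=
  let ⟨hu, huv, hv, huniq⟩ := h
  ⟨hu, hv, huv, fun w huw hw => huniq w hw huw (hS _ _)⟩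

theorem StdStep.persist {T S : Set V} {u v : V} (h : StdStep G T u v) (hTS : T ⊆ S)
    (hv : v ∉ S) : StdStep G S u v :=
  let ⟨hu, hT⟩ := stdStep_iff.1 h
  stdStep_iff.2 ⟨hTS hu, hT.anti (Set.compl_subset_compl.2 hTS) hv⟩

theorem PSDStep.persist {T S : Set V} {u v : V} (h : PSDStep G T u v) (hTS : T ⊆ S)
    (hv : v ∉ S) : PSDStep G S u v :=
  let ⟨hu, X, hX, hT⟩ := psdStep_iff.1 h
  psdStep_iff.2 ⟨hTS hu, X ∩ Sᶜ, hX.inter (Set.compl_subset_compl.2 hTS),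
    hT.anti Set.inter_subset_left ⟨hT.mem, hv⟩⟩

theorem IsStdForcingSet.isPSDForcingSet {B : Set V} (hB : IsStdForcingSet G B) :
    IsPSDForcingSet G B :=
  Derives.imp hB fun _ _ _ => StdStep.psdStep

theorem isStdForcingSet_iff [Finite V] {B : Set V} :
    IsStdForcingSet G B ↔ ∀ S, B ⊆ S → S ≠ Set.univ → ∃ u v, StdStep G S u v :=
  ⟨fun h _ hBS hS => Derives.exists_step h (fun _ _ _ _ => StdStep.persist) hBS
      fun huniv => hS (Set.univ_subset_iff.1 huniv),
    derives_univ_of_forall_exists_step fun _ _ _ h => h.2.1⟩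

theorem isPSDForcingSet_iff [Finite V] {B : Set V} :
    IsPSDForcingSet G B ↔ ∀ S, B ⊆ S → S ≠ Set.univ → ∃ u v, PSDStep G S u v :=
  ⟨fun h _ hBS hS => Derives.exists_step h (fun _ _ _ _ => PSDStep.persist) hBS
      fun huniv => hS (Set.univ_subset_iff.1 huniv),
    derives_univ_of_forall_exists_step fun _ _ _ h => h.2.2.1⟩

theorem IsPSDForcingSet.mono [Finite V] {B B' : Set V} (hB : IsPSDForcingSet G B) (h : B ⊆ B') :
    IsPSDForcingSet G B' :=
  isPSDForcingSet_iff.2 fun S hS => isPSDForcingSet_iff.1 hB S (h.trans hS)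

theorem IsPSDForcingSet.exists_uniqueNeighbor {B C : Set V} (hB : IsPSDForcingSet G B)
    (hC : IsComponent G Bᶜ C) : ∃ t ∈ B, ∃ v, UniqueNeighbor G C t v := by
  obtain ⟨c, hc⟩ := hC.connected.nonempty
  obtain ⟨t, v, hstep⟩ := Derives.exists_step hB (fun _ _ _ _ => PSDStep.persist)
    (Set.subset_compl_comm.1 hC.subset) (fun h => h (Set.mem_univ c) hc)
  obtain ⟨ht, X, hX, hv⟩ := psdStep_iff.1 hstep
  rw [compl_compl] at hX
  have hCX : C ⊆ X := hX.subset_of_preconnected subset_rfl hC.connected.preconnected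
    ⟨v, hv.mem, hX.subset hv.mem⟩
  have htB : t ∈ B := by
    by_contra htB
    exact ht (hC.mem_of_adj (hX.subset hv.mem) htB hv.adj.symm)
  exact ⟨t, htB, v, hv.anti hCX (hX.subset hv.mem)⟩

theorem ClawFree.derives_stdStep_and_preconnected (hG : ClawFree G) {B T : Set V}
    (h : Derives (PSDStep G) B T) (hB : (G.induce Bᶜ).Preconnected) :
    Derives (StdStep G) B T ∧ (G.induce Tᶜ).Preconnected := by
  induction h with
  | refl => exact ⟨.refl _, hB⟩
  | @tail T u v _ hstep ih =>
    obtain ⟨hBT, hT⟩ := ih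
    have hstd := hstep.stdStep hT
    refine ⟨.tail hBT hstd, ?_⟩
    rw [Set.insert_eq, Set.compl_union, Set.inter_comm, ← Set.sdiff_eq]
    exact hG.preconnected_induce_sdiff_of_uniqueNeighbor hT (not_not_intro hstd.1)
      (stdStep_iff.1 hstd).2

/-! ### Exchanging the two ends of a force -/

theorem IsPSDForcingSet.exchange [Finite V] {B C : Set V} (hB : IsPSDForcingSet G B)
    (hC : IsComponentUnion G Bᶜ C) {t v : V} (hv : UniqueNeighbor G C t v) :
    IsPSDForcingSet G (insert v (B \ {t})) := by
  rw [isPSDForcingSet_iff] at hB ⊢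
  intro S hS hne
  have hvS : v ∈ S := hS (Set.mem_insert v _)
  have hBS : B \ {t} ⊆ S := (Set.subset_insert v _).trans hS
  by_cases ht : t ∈ S
  · exact hB S (by rwa [Set.sdiff_singleton_subset_iff, Set.insert_eq_of_mem ht] at hBS) hne
  have hwhite : ∀ {x}, x ∉ S → x ≠ t → x ∉ B := fun hx hxt hxB => hx (hBS ⟨hxB, hxt⟩)
  -- Outside `C`, the only white neighbor of `v` is `t`, so the force is reversed.
  refine ⟨v, t, psdStep_iff.2 ⟨hvS, insert t (Sᶜ \ C), ⟨?_, ?_⟩, Set.mem_insert t _,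
    hv.adj.symm, ?_⟩⟩
  · exact Set.insert_subset ht Set.sdiff_subset
  · intro x y hx hy hxy
    refine Or.inr ⟨hy, fun hyC => ?_⟩
    rcases hx with rfl | ⟨hxS, hxC⟩
    · exact hy (hv.eq_of_adj hyC hxy ▸ hvS)
    · by_cases hxt : x = t
      · exact hy (hv.eq_of_adj hyC (hxt ▸ hxy) ▸ hvS)
      · exact hxC (hC.mem_of_adj hyC (hwhite hxS hxt) hxy.symm)
  · rintro w (hwt | ⟨hwS, hwC⟩) hvw
    · exact hwt
    · by_contra hwt
      exact hwC (hC.mem_of_adj hv.mem (hwhite hwS hwt) hvw)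

theorem IsComponentUnion.exchange {B X : Set V} (hX : IsComponentUnion G Bᶜ X) {t v : V}
    (ht : ∀ x ∈ X, G.Adj t x → x = v) :
    IsComponentUnion G (insert v (B \ {t}))ᶜ (X \ {v}) where
  subset := by
    rintro x ⟨hx, hxv⟩ (h | h)
    exacts [hxv h, hX.subset hx h.1]
  mem_of_adj := by
    rintro x y ⟨hx, hxv⟩ hy hxy
    refine ⟨hX.mem_of_adj hx (fun hyB => hy (Or.inr ⟨hyB, ?_⟩)) hxy, fun hyv => hy (Or.inl hyv)⟩
    rintro rfl
    exact hxv (ht x hx hxy.symm)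

theorem IsPSDForcingSet.exists_larger_component_of_uniqueNeighbor [Finite V] {B K C : Set V}
    (hB : IsPSDForcingSet G B) (hK : IsComponent G Bᶜ K) (hC : IsComponentUnion G Bᶜ C)
    (hKC : Disjoint K C) {t v k : V} (ht : t ∈ B) (hv : UniqueNeighbor G C t v) (hk : k ∈ K)
    (htk : G.Adj t k) :
    ∃ B' K', IsPSDForcingSet G B' ∧ B'.ncard = B.ncard ∧ IsComponent G B'ᶜ K' ∧ K ⊂ K' := by
  have hvB : v ∉ B := hC.subset hv.mem
  have hKW : K ⊆ (insert v (B \ {t}))ᶜ := by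
    rintro x hx (rfl | h)
    exacts [hKC.notMem_of_mem_left hx hv.mem, hK.subset hx h.1]
  have htW : t ∈ (insert v (B \ {t}))ᶜ := by
    rintro (rfl | h)
    exacts [hvB ht, h.2 rfl]
  obtain ⟨K', hK', hlt⟩ := exists_isComponent_ssuperset hKW hK.connected.preconnected htW
    (fun h => hK.subset h ht) hk htk
  exact ⟨_, K', hB.exchange hC hv, Set.ncard_exchange hvB ht, hK', hlt⟩

/-- As long as exchanging the first force into `C` does not enlarge `K`, it shrinks `C`, and `u`
ends up with a unique neighbor in `C`. -/
theorem ClawFree.exists_larger_component [Finite V] (hG : ClawFree G) {B K C : Set V}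
    (hB : IsPSDForcingSet G B) (hK : IsComponent G Bᶜ K) (hC : IsComponent G Bᶜ C)
    (hKC : Disjoint K C) {u k y : V} (hu : u ∈ B) (hk : k ∈ K) (huk : G.Adj u k) (hy : y ∈ C)
    (huy : G.Adj u y) :
    ∃ B' K', IsPSDForcingSet G B' ∧ B'.ncard = B.ncard ∧ IsComponent G B'ᶜ K' ∧ K ⊂ K' := by
  induction hn : C.ncard using Nat.strong_induction_on generalizing B C y with
  | _ n ih =>
  obtain ⟨t, ht, v, hv⟩ := hB.exists_uniqueNeighbor hC
  by_cases htK : ∃ k' ∈ K, G.Adj t k'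
  · obtain ⟨k', hk', htk'⟩ := htK
    exact hB.exists_larger_component_of_uniqueNeighbor hK hC.toIsComponentUnion hKC ht hv hk' htk'
  by_cases huniq : ∀ w ∈ C, G.Adj u w → w = y
  · exact hB.exists_larger_component_of_uniqueNeighbor hK hC.toIsComponentUnion hKC hu
      ⟨hy, huy, huniq⟩ hk huk
  obtain ⟨y', ⟨hy', hyv⟩, huy'⟩ : ∃ y' ∈ C \ {v}, G.Adj u y' := by
    by_contra! hnone
    have heq : ∀ w ∈ C, G.Adj u w → w = v := fun w hw huw => by
      by_contra hwv
      exact hnone w ⟨hw, hwv⟩ huw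
    exact huniq fun w hw huw => (heq w hw huw).trans (heq y hy huy).symm
  have hvB : v ∉ B := hC.subset hv.mem
  have hvK : v ∉ K := hKC.notMem_of_mem_right hv.mem
  have hut : u ≠ t := fun h => htK ⟨k, hk, h ▸ huk⟩
  have hK' : IsComponentUnion G (insert v (B \ {t}))ᶜ K := by
    have := hK.exchange (t := t) (v := v) fun x hx htx => absurd ⟨x, hx, htx⟩ htK
    rwa [Set.sdiff_singleton_eq_self hvK] at this
  have hC' : IsComponent G (insert v (B \ {t}))ᶜ (C \ {v}) :=
    ⟨hC.exchange hv.eq_of_adj, (connected_iff _).2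
      ⟨hG.preconnected_induce_sdiff_of_uniqueNeighbor hC.connected.preconnected
        (fun h => hC.subset h ht) hv, ⟨y', hy', hyv⟩⟩⟩
  rw [← Set.ncard_exchange hvB ht]
  exact ih (C \ {v}).ncard (hn ▸ Set.ncard_sdiff_singleton_lt_of_mem hv.mem)
    (hB.exchange hC.toIsComponentUnion hv) ⟨hK', hK.connected⟩ hC'
    (hKC.mono_right Set.sdiff_subset) (Or.inr ⟨hu, hut⟩) ⟨hy', hyv⟩ huy' rfl

theorem ClawFree.exists_isolated_component [Finite V] (hG : ClawFree G) {B : Set V}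
    (hB : IsPSDForcingSet G B) (hne : B ≠ Set.univ) :
    ∃ B' K, IsPSDForcingSet G B' ∧ B'.ncard = B.ncard ∧ IsComponent G B'ᶜ K ∧
      ∀ u ∈ B', ∀ k ∈ K, G.Adj u k → ∀ y ∉ B', G.Adj u y → y ∈ K := by
  obtain ⟨x, hx⟩ := (Set.ne_univ_iff_exists_notMem B).1 hne
  obtain ⟨K₀, -, hK₀⟩ := exists_mem_isComponent G (W := Bᶜ) hx
  obtain ⟨K, hmax⟩ := Set.Finite.exists_maximal
    (Set.toFinite {K | ∃ B', IsPSDForcingSet G B' ∧ B'.ncard = B.ncard ∧ IsComponent G B'ᶜ K})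
    ⟨K₀, B, hB, rfl, hK₀⟩
  obtain ⟨B', hB', hcard, hK⟩ := hmax.prop
  refine ⟨B', K, hB', hcard, hK, fun u hu k hk huk y hy huy => ?_⟩
  by_contra hyK
  obtain ⟨C, hyC, hC⟩ := exists_mem_isComponent G (W := B'ᶜ) hy
  obtain ⟨B'', K', hB'', hcard', hK', hlt⟩ := hG.exists_larger_component hB' hK hC
    (hK.disjoint_of_mem hC hyC hyK) hu hk huk hyC huy
  exact hmax.not_gt ⟨B'', hB'', hcard'.trans hcard, hK'⟩ hlt

/-! ### Deleting a closed neighborhood -/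

/-- The vertices outside the closed neighborhood of `K`, which remain when a white component `K` is
removed together with the blue vertices around it. -/
def farFrom (G : SimpleGraph V) (K : Set V) : Set V :=
  {x | x ∉ K ∧ ∀ k ∈ K, ¬ G.Adj k x}

theorem exists_adj_of_notMem_farFrom {K : Set V} {u : V} (hu : u ∉ farFrom G K) (huK : u ∉ K) :
    ∃ k ∈ K, G.Adj k u := by
  by_contra! hnone
  exact hu ⟨huK, hnone⟩

theorem IsComponentUnion.compl_farFrom_sdiff {B K : Set V} (hK : IsComponentUnion G Bᶜ K) :
    (farFrom G K)ᶜ \ K = B \ farFrom G K := by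
  ext x
  constructor
  · rintro ⟨hx, hxK⟩
    obtain ⟨k, hk, hkx⟩ := exists_adj_of_notMem_farFrom hx hxK
    exact ⟨by_contra fun hxB => hxK (hK.mem_of_adj hk hxB hkx), hx⟩
  · rintro ⟨hxB, hx⟩
    exact ⟨hx, fun hxK => hK.subset hxK hxB⟩

theorem IsPSDForcingSet.induce [Finite V] {B W : Set V} (hB : IsPSDForcingSet G B)
    (hW : ∀ u ∉ W, ∀ v ∈ W, v ∉ B → ¬ G.Adj u v) :
    IsPSDForcingSet (G.induce W) (Subtype.val ⁻¹' B) := by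
  rw [isPSDForcingSet_iff] at hB ⊢
  intro S hS hne
  obtain ⟨x, hx⟩ := (Set.ne_univ_iff_exists_notMem S).1 hne
  have hmem : ∀ w : W, (w : V) ∈ Subtype.val '' S ∪ Wᶜ ↔ w ∈ S := by simp
  have hBS : B ⊆ Subtype.val '' S ∪ Wᶜ := fun b hb => by
    by_cases hbW : b ∈ W
    · exact (hmem ⟨b, hbW⟩).2 (hS hb)
    · exact Or.inr hbW
  obtain ⟨u, v, hstep⟩ := hB _ hBS ((Set.ne_univ_iff_exists_notMem _).2 ⟨x, mt (hmem x).1 hx⟩)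
  obtain ⟨hu, X, hX, hv⟩ := psdStep_iff.1 hstep
  have hvS := hX.subset hv.mem
  have hvW : v ∈ W := by_contra fun h => hvS (Or.inr h)
  have huW : u ∈ W := by_contra fun h => hW u h v hvW (fun hvB => hvS (hBS hvB)) hv.adj
  refine ⟨⟨u, huW⟩, ⟨v, hvW⟩, psdStep_iff.2 ⟨(hmem _).1 hu, Subtype.val ⁻¹' X, ⟨?_, ?_⟩,
    hv.mem, hv.adj, fun w hw huw => Subtype.ext (hv.eq_of_adj hw huw)⟩⟩
  · exact fun w hw hwS => hX.subset hw ((hmem w).2 hwS)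
  · exact fun x y hx hy hxy => hX.mem_of_adj hx (mt (hmem y).1 hy) hxy

theorem IsPSDForcingSet.induce_farFrom [Finite V] {B K : Set V} (hB : IsPSDForcingSet G B)
    (hK : IsComponentUnion G Bᶜ K)
    (hiso : ∀ u ∈ B, ∀ k ∈ K, G.Adj u k → ∀ y ∉ B, G.Adj u y → y ∈ K) :
    IsPSDForcingSet (G.induce (farFrom G K)) (Subtype.val ⁻¹' B) := by
  refine hB.induce fun u hu v hv hvB huv => ?_
  by_cases huK : u ∈ K
  · exact hv.2 u huK huv
  · obtain ⟨k, hk, hku⟩ := exists_adj_of_notMem_farFrom hu huK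
    have huB : u ∈ B := (hK.compl_farFrom_sdiff.subset ⟨hu, huK⟩).1
    exact hv.1 (hiso u huB k hk hku.symm v hvB huv)

theorem IsStdForcingSet.image_union_boundary [Finite V] {K : Set V}
    (hK : IsStdForcingSet G Kᶜ) {D : Set (farFrom G K)}
    (hD : IsStdForcingSet (G.induce (farFrom G K)) D) :
    IsStdForcingSet G (Subtype.val '' D ∪ ((farFrom G K)ᶜ \ K)) := by
  rw [isStdForcingSet_iff] at hK hD ⊢
  intro S hS hne
  obtain ⟨hDS, hboundary⟩ := Set.union_subset_iff.1 hS
  by_cases hfar : farFrom G K ⊆ S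
  · refine hK S (fun x hx => ?_) hne
    by_cases hxW : x ∈ farFrom G K
    exacts [hfar hxW, hboundary ⟨hxW, hx⟩]
  obtain ⟨x, hxW, hxS⟩ := Set.not_subset.1 hfar
  obtain ⟨u, v, hu, hv, huv, huniq⟩ := hD (Subtype.val ⁻¹' S) (Set.image_subset_iff.1 hDS)
    ((Set.ne_univ_iff_exists_notMem _).2 ⟨⟨x, hxW⟩, hxS⟩)
  refine ⟨u, v, hu, hv, huv, fun w huw hw => ?_⟩
  have hwW : w ∈ farFrom G K := by
    by_contra hwW
    exact hw (hboundary ⟨hwW, fun hwK => u.2.2 w hwK huw.symm⟩)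
  exact congrArg Subtype.val (huniq ⟨w, hwW⟩ huw hw)

theorem ncard_image_val_union_sdiff [Finite V] {B W : Set V} {D : Set W}
    (hD : D.ncard = (Subtype.val ⁻¹' B : Set W).ncard) :
    (Subtype.val '' D ∪ B \ W).ncard = B.ncard := by
  have hdisj : Disjoint (Subtype.val '' D) (B \ W) :=
    Set.disjoint_sdiff_right.mono_left (Subtype.coe_image_subset W D)
  have hcard : (Subtype.val '' D).ncard = (B ∩ W).ncard := by
    rw [Set.ncard_image_of_injective _ Subtype.val_injective, hD,
      ← Set.ncard_image_of_injective _ Subtype.val_injective, Subtype.image_preimage_coe,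
      Set.inter_comm]
  rw [Set.ncard_union_eq hdisj, hcard, Set.ncard_inter_add_ncard_sdiff_eq_ncard]

theorem ClawFree.exists_isStdForcingSet_ncard_eq [Finite V] (hG : ClawFree G) {B : Set V}
    (hB : IsPSDForcingSet G B) : ∃ B', IsStdForcingSet G B' ∧ B'.ncard = B.ncard := by
  induction hn : Nat.card V using Nat.strong_induction_on generalizing V with
  | _ n ih =>
  by_cases huniv : B = Set.univ
  · exact ⟨B, huniv ▸ .refl _, rfl⟩
  obtain ⟨B₁, K, hB₁, hcard, hK, hiso⟩ := hG.exists_isolated_component hB huniv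
  have hKstd : IsStdForcingSet G Kᶜ :=
    (hG.derives_stdStep_and_preconnected (hB₁.mono (Set.subset_compl_comm.1 hK.subset))
      (by rw [compl_compl]; exact hK.connected.preconnected)).1
  have hlt : Nat.card (farFrom G K) < n := by
    obtain ⟨k, hk⟩ := hK.connected.nonempty
    exact hn ▸ Set.ncard_lt_card fun h => (h ▸ Set.mem_univ k : k ∈ farFrom G K).1 hk
  obtain ⟨D, hD, hDcard⟩ :=
    ih _ hlt (hG.induce _) (hB₁.induce_farFrom hK.toIsComponentUnion hiso) rfl
  refine ⟨_, hKstd.image_union_boundary hD, ?_⟩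
  rw [hK.compl_farFrom_sdiff, ncard_image_val_union_sdiff hDcard, hcard]

end

/-- If `G` is any (not necessarily connected) claw-free finite simple graph,
then `Z₊(G) = Z(G)`. -/
theorem clawFree_Zplus_eq_Z {V : Type*} [Fintype V] (G : SimpleGraph V)
    (hclaw : ClawFree G) : Zplus G = Z G := by
  unfold Zplus Z
  congr! 3 with n
  constructor
  · rintro ⟨B, hB, rfl⟩
    exact hclaw.exists_isStdForcingSet_ncard_eq hB
  · rintro ⟨B, hB, hn⟩
    exact ⟨B, hB.isPSDForcingSet, hn⟩
end

section
/- Let G be a connected finite simple graph and let S be a minimum positive semidefinite zero forcing set of G. If the induced subgraph G − S is disconnected, then for every connected component C of G − S there exists another minimum positive semidefinite zero forcing set S' of G such that G − S' has a connected component C' that properly contains C (i.e., the vertex set of C is a proper subset of the vertex set of C'). -/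
open SimpleGraph

/-!
If a vertex `u` of a minimum forcing set `S` can force `v`, then `S − u + v` is again a minimum
forcing set, because `v` can force `u` back. The exchange makes `u` white, so it enlarges a
component `C` of `G − S` as soon as `u` has a neighbor in `C` and `v ∉ C`.

To find such an exchange, take `x ∈ S` adjacent both to `C` and to another component `D`. Some
`u ∈ S` can force some `v ∈ D`. If `u` is adjacent to `C`, exchange `u` and `v`; if `v` is the only
neighbor of `x` in `D`, exchange `x` and `v`. Otherwise exchanging `u` and `v` leaves `C` a
component, and `x` is still in the blue set and adjacent to a component inside `D − v`, so we
recurse on `|D|`.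

If no such `x` existed while `C` could be linked in `G` to another component, the closed
neighborhood of `C` would not be closed under adjacency, so some `x ∈ S` whose white neighbors all
lie in `C` would have a neighbor `y ∈ S` with no neighbor in `C`; but then `y` forces `x` from
`S − x`, contradicting minimality.
-/

section White

variable {V : Type*} {G : SimpleGraph V} {S T A C D E : Set V} {a c d u v x y : V}

/-- `E` is a union of vertex sets of connected components of `G − S`, encoded as a set of vertices
outside `S` that is closed under adjacency in `G − S`. -/
structure IsWhiteClosed (G : SimpleGraph V) (S E : Set V) : Prop where
  subset_compl : E ⊆ Sᶜ
  mem_of_adj : ∀ ⦃a⦄, a ∈ E → ∀ ⦃b⦄, b ∉ S → G.Adj a b → b ∈ E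

/-- `D` is the vertex set of a connected component of `G − S`. Connectedness is asked of `G[D]`,
which does not mention `S`, so that one set can be compared across different blue sets. -/
structure IsWhiteComponent (G : SimpleGraph V) (S D : Set V) : Prop extends
    IsWhiteClosed G S D where
  connected : (G.induce D).Connected

theorem IsWhiteClosed.mem_of_reachable_induce (hE : IsWhiteClosed G S E) (hA : A ⊆ Sᶜ) {a b : A}
    (hab : (G.induce A).Reachable a b) (ha : ↑a ∈ E) : ↑b ∈ E :=
  hab.mem_subgraphVerts (H := (⊤ : (G.induce A).Subgraph).induce (Subtype.val ⁻¹' E))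
    (fun _ hp q hpq => ⟨hp, hE.mem_of_adj hp (hA q.2) hpq, hpq⟩) ha

theorem IsWhiteClosed.subset_of_connected (hE : IsWhiteClosed G S E) (hD : (G.induce D).Connected)
    (hDS : D ⊆ Sᶜ) (haD : a ∈ D) (haE : a ∈ E) : D ⊆ E :=
  fun b hb => hE.mem_of_reachable_induce hDS (hD ⟨a, haD⟩ ⟨b, hb⟩) haE

theorem IsWhiteComponent.eq_of_mem (hC : IsWhiteComponent G S C) (hD : IsWhiteComponent G S D)
    (haC : a ∈ C) (haD : a ∈ D) : C = D :=
  (hD.subset_of_connected hC.connected hC.subset_compl haC haD).antisymm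
    (hC.subset_of_connected hD.connected hD.subset_compl haD haC)

theorem isWhiteComponent_supp (K : (G.induce Sᶜ).ConnectedComponent) :
    IsWhiteComponent G S (Subtype.val '' K.supp) where
  subset_compl := Subtype.coe_image_subset _ _
  mem_of_adj := by
    rintro _ ⟨a, ha, rfl⟩ b hb hab
    exact ⟨⟨b, hb⟩, K.mem_supp_of_adj_mem_supp ha hab, rfl⟩
  connected := by
    let f : K.toSimpleGraph →g G.induce (Subtype.val '' K.supp) :=
      ⟨fun a => ⟨a.1, a.1, a.2, rfl⟩, id⟩
    refine K.connected_toSimpleGraph.map f ?_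
    rintro ⟨_, a, ha, rfl⟩
    exact ⟨⟨a, ha⟩, rfl⟩

theorem exists_isWhiteComponent_mem (G : SimpleGraph V) (ha : a ∉ S) :
    ∃ D, IsWhiteComponent G S D ∧ a ∈ D :=
  ⟨_, isWhiteComponent_supp ((G.induce Sᶜ).connectedComponentMk ⟨a, ha⟩), ⟨a, ha⟩, rfl, rfl⟩

theorem IsWhiteComponent.exists_supp_eq (hD : IsWhiteComponent G S D) :
    ∃ K : (G.induce Sᶜ).ConnectedComponent, Subtype.val '' K.supp = D := by
  obtain ⟨a, ha⟩ := hD.connected.nonempty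
  let a' : (Sᶜ : Set V) := ⟨a, hD.subset_compl ha⟩
  exact ⟨_, (isWhiteComponent_supp ((G.induce Sᶜ).connectedComponentMk a')).eq_of_mem hD
    ⟨a', rfl, rfl⟩ ha⟩

theorem psdStep_iff_exists_isWhiteClosed :
    PSDStep G S u v ↔
      u ∈ S ∧ G.Adj u v ∧ ∃ E, IsWhiteClosed G S E ∧ v ∈ E ∧ ∀ w ∈ E, G.Adj u w → w = v := by
  refine and_congr_right fun _ => and_congr_right fun _ => ⟨?_, ?_⟩
  · rintro ⟨hv, huniq⟩
    refine ⟨_, (isWhiteComponent_supp ((G.induce Sᶜ).connectedComponentMk ⟨v, hv⟩)).1,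
      ⟨⟨v, hv⟩, rfl, rfl⟩, ?_⟩
    rintro _ ⟨w, hw, rfl⟩ huw
    exact huniq w w.2 huw (ConnectedComponent.exact hw).symm
  · rintro ⟨E, hE, hvE, huniq⟩
    exact ⟨hE.subset_compl hvE, fun w _ huw hvw =>
      huniq w (hE.mem_of_reachable_induce subset_rfl hvw hvE) huw⟩

theorem PSDStep.notMem (h : PSDStep G S u v) : v ∉ S :=
  h.2.2.1

theorem PSDStep.eq_of_adj (h : PSDStep G S u v) (hD : IsWhiteComponent G S D) (hv : v ∈ D)
    (ha : a ∈ D) (hua : G.Adj u a) : a = v := by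
  obtain ⟨-, -, E, hE, hvE, huniq⟩ := psdStep_iff_exists_isWhiteClosed.1 h
  exact huniq a (hE.subset_of_connected hD.connected hD.subset_compl hv hvE ha) hua

theorem PSDStep.mono (h : PSDStep G S u v) (hST : S ⊆ T) (hv : v ∉ T) : PSDStep G T u v := by
  obtain ⟨hu, huv, E, hE, hvE, huniq⟩ := psdStep_iff_exists_isWhiteClosed.1 h
  refine psdStep_iff_exists_isWhiteClosed.2
    ⟨hST hu, huv, E \ T, ⟨fun a ha => ha.2, ?_⟩, ⟨hvE, hv⟩, fun w hw => huniq w hw.1⟩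
  exact fun a ha b hb hab => ⟨hE.mem_of_adj ha.1 (fun hbS => hb (hST hbS)) hab, hb⟩

theorem Derives.head {step : Set V → V → V → Prop} (hs : step S u v)
    (h : Derives step (insert v S) A) : Derives step S A := by
  generalize hB : insert v S = B at h
  induction h with
  | refl => exact hB ▸ (Derives.refl S).tail hs
  | tail _ ht ih => exact ih.tail ht

theorem Derives.psdStep_union_of_subset (h : Derives (PSDStep G) S A) (hST : S ⊆ T) :
    Derives (PSDStep G) T (A ∪ T) := by
  induction h with
  | refl => exact (Set.union_eq_self_of_subset_left hST).symm ▸ Derives.refl T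
  | @tail B u v _ hs ih =>
    rw [Set.insert_union]
    by_cases hv : v ∈ B ∪ T
    · rwa [Set.insert_eq_of_mem hv]
    · exact ih.tail (hs.mono Set.subset_union_left hv)

theorem IsPSDForcingSet.mono_s3 (h : IsPSDForcingSet G S) (hST : S ⊆ T) : IsPSDForcingSet G T := by
  rw [IsPSDForcingSet, ← Set.univ_union T]
  exact Derives.psdStep_union_of_subset h hST

theorem Derives.exists_psdStep_mem (h : Derives (PSDStep G) S A) (hD : IsWhiteClosed G S D)
    (hAD : ¬ Disjoint A D) : ∃ u, ∃ v ∈ D, PSDStep G S u v := by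
  induction h with
  | refl => exact absurd (Set.disjoint_left.2 fun a haS haD => hD.subset_compl haD haS) hAD
  | @tail T u v _ hs ih =>
    by_cases hTD : Disjoint T D
    swap
    · exact ih hTD
    have hDT : ∀ ⦃a⦄, a ∈ D → a ∉ T := fun _ haD haT => Set.disjoint_left.1 hTD haT haD
    have hvD : v ∈ D := by_contra fun hvD => hAD (Set.disjoint_insert_left.2 ⟨hvD, hTD⟩)
    obtain ⟨hu, huv, E, hE, hvE, huniq⟩ := psdStep_iff_exists_isWhiteClosed.1 hs
    have huS : u ∈ S := by_contra fun huS => hDT (hD.mem_of_adj hvD huS huv.symm) hu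
    refine ⟨u, v, hvD, psdStep_iff_exists_isWhiteClosed.2
      ⟨huS, huv, D ∩ E, ⟨fun a ha => hD.subset_compl ha.1, ?_⟩, ⟨hvD, hvE⟩,
        fun w hw => huniq w hw.2⟩⟩
    intro a ha b hb hab
    have hbD := hD.mem_of_adj ha.1 hb hab
    exact ⟨hbD, hE.mem_of_adj ha.2 (hDT hbD) hab⟩

theorem PSDStep.exchange (h : PSDStep G S u v) : PSDStep G (insert v (S \ {u})) v u := by
  obtain ⟨hu, huv, E, hE, hvE, huniq⟩ := psdStep_iff_exists_isWhiteClosed.1 h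
  have hvS := hE.subset_compl hvE
  refine psdStep_iff_exists_isWhiteClosed.2 ⟨Set.mem_insert _ _, huv.symm, insert u (Sᶜ \ E),
    ⟨?_, ?_⟩, Set.mem_insert _ _, ?_⟩
  · rintro a (rfl | ⟨haS, haE⟩) (rfl | ⟨haS', hau⟩)
    exacts [hvS hu, hau rfl, haE hvE, haS haS']
  · intro a ha b hb hab
    obtain ⟨hbv, hbSu⟩ := not_or.1 hb
    by_cases hbu : b = u
    · exact Or.inl hbu
    refine Or.inr ⟨fun hbS => hbSu ⟨hbS, hbu⟩, fun hbE => ?_⟩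
    rcases ha with rfl | ⟨haS, haE⟩
    · exact hbv (huniq b hbE hab)
    · exact haE (hE.mem_of_adj hbE haS hab.symm)
  · rintro w (rfl | ⟨hwS, hwE⟩) hvw
    · rfl
    · exact absurd (hE.mem_of_adj hvE hwS hvw) hwE

theorem IsMinPSDForcingSet.exchange (hS : IsMinPSDForcingSet G S) (h : PSDStep G S u v) :
    IsMinPSDForcingSet G (insert v (S \ {u})) := by
  have hsub : S ⊆ insert u (insert v (S \ {u})) := by
    rw [Set.insert_comm, Set.insert_sdiff_singleton, Set.insert_eq_of_mem h.1]
    exact Set.subset_insert v S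
  exact ⟨Derives.head h.exchange (hS.1.mono_s3 hsub),
    fun B hB => (Set.ncard_exchange h.notMem h.1).trans_le (hS.2 B hB)⟩

theorem IsMinPSDForcingSet.not_psdStep_sdiff_singleton [Finite V] (hS : IsMinPSDForcingSet G S)
    (hx : x ∈ S) : ¬ PSDStep G (S \ {x}) y x := by
  intro h
  have hforce : IsPSDForcingSet G (S \ {x}) := by
    refine Derives.head h ?_
    rw [Set.insert_sdiff_singleton, Set.insert_eq_of_mem hx]
    exact hS.1
  exact (Set.ncard_sdiff_singleton_lt_of_mem hx S.toFinite).not_ge (hS.2 _ hforce)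

theorem IsWhiteClosed.psdStep_sdiff_singleton (hC : IsWhiteClosed G S C)
    (hxC : ∀ w ∉ S, G.Adj x w → w ∈ C) (hy : y ∈ S) (hyx : G.Adj y x)
    (hyC : ∀ c ∈ C, ¬ G.Adj y c) : PSDStep G (S \ {x}) y x := by
  refine psdStep_iff_exists_isWhiteClosed.2 ⟨⟨hy, hyx.ne⟩, hyx, insert x C, ⟨?_, ?_⟩,
    Set.mem_insert _ _, ?_⟩
  · rintro a (rfl | haC) ⟨haS, hax⟩
    exacts [hax rfl, hC.subset_compl haC haS]
  · intro a ha b hb hab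
    by_cases hbx : b = x
    · exact Or.inl hbx
    have hbS : b ∉ S := fun hbS => hb ⟨hbS, hbx⟩
    rcases ha with rfl | haC
    exacts [Or.inr (hxC b hbS hab), Or.inr (hC.mem_of_adj haC hbS hab)]
  · rintro w (rfl | hwC) hyw
    · rfl
    · exact absurd hyw (hyC w hwC)

theorem IsMinPSDForcingSet.exists_adj_white_notMem [Finite V] (hS : IsMinPSDForcingSet G S)
    (hC : IsWhiteClosed G S C) (hc : c ∈ C) (hcd : G.Reachable c d) (hdS : d ∉ S) (hdC : d ∉ C) :
    ∃ x ∈ S, (∃ c ∈ C, G.Adj x c) ∧ ∃ y ∉ S, y ∉ C ∧ G.Adj x y := by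
  by_contra! hnone
  let N : Set V := {z | z ∉ C → z ∈ S ∧ ∃ c ∈ C, G.Adj z c}
  have hN : ∀ a ∈ N, ∀ b, G.Adj a b → b ∈ N := by
    intro a ha b hab hbC
    by_cases haC : a ∈ C
    · exact ⟨by_contra fun hbS => hbC (hC.mem_of_adj haC hbS hab), a, haC, hab.symm⟩
    obtain ⟨haS, haN⟩ := ha haC
    have hwhite : ∀ w ∉ S, G.Adj a w → w ∈ C := fun w hw haw =>
      by_contra fun hwC => hnone a haS haN w hw hwC haw
    have hbS : b ∈ S := by_contra fun hbS => hbC (hwhite b hbS hab)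
    refine ⟨hbS, ?_⟩
    by_contra! hbN
    exact hS.not_psdStep_sdiff_singleton haS (hC.psdStep_sdiff_singleton hwhite hbS hab.symm hbN)
  have hdN : d ∈ N := hcd.mem_subgraphVerts (H := (⊤ : G.Subgraph).induce N)
    (fun a ha b hab => ⟨ha, hN a ha b hab, hab⟩) (fun hcC => absurd hc hcC)
  exact hdS (hdN hdC).1

theorem IsWhiteClosed.subset_compl_exchange (hE : IsWhiteClosed G S E) (hv : v ∉ E) :
    E ⊆ (insert v (S \ {u}))ᶜ := by
  rintro a haE (rfl | haS)
  exacts [hv haE, hE.subset_compl haE haS.1]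

theorem IsWhiteClosed.exchange (hE : IsWhiteClosed G S E) (hv : v ∉ E)
    (hu : ∀ a ∈ E, ¬ G.Adj u a) : IsWhiteClosed G (insert v (S \ {u})) E where
  subset_compl := hE.subset_compl_exchange hv
  mem_of_adj a ha b hb hab := by
    have hbu : b ≠ u := fun hbu => hu a ha (hbu ▸ hab.symm)
    exact hE.mem_of_adj ha (fun hbS => hb (Or.inr ⟨hbS, hbu⟩)) hab

theorem IsWhiteComponent.isWhiteClosed_sdiff_exchange (hD : IsWhiteComponent G S D)
    (h : PSDStep G S u v) (hv : v ∈ D) : IsWhiteClosed G (insert v (S \ {u})) (D \ {v}) where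
  subset_compl := by
    rintro a ⟨haD, hav⟩ (hav' | haS)
    exacts [hav hav', hD.subset_compl haD haS.1]
  mem_of_adj a ha b hb hab := by
    obtain ⟨hbv, hbSu⟩ := not_or.1 hb
    have hbu : b ≠ u := by
      rintro rfl
      exact ha.2 (h.eq_of_adj hD hv ha.1 hab.symm)
    exact ⟨hD.mem_of_adj ha.1 (fun hbS => hbSu ⟨hbS, hbu⟩) hab, hbv⟩

theorem IsWhiteComponent.exists_ssubset_exchange (hC : IsWhiteComponent G S C)
    (h : PSDStep G S u v) (hv : v ∉ C) (hc : c ∈ C) (huc : G.Adj u c) :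
    ∃ K, IsWhiteComponent G (insert v (S \ {u})) K ∧ C ⊂ K := by
  obtain ⟨K, hK, huK⟩ := exists_isWhiteComponent_mem G h.exchange.notMem
  have hCS := hC.subset_compl_exchange (u := u) hv
  have hcK : c ∈ K := hK.mem_of_adj huK (hCS hc) huc
  exact ⟨K, hK, hK.subset_of_connected hC.connected hCS hc hcK,
    fun hKC => hC.subset_compl (hKC huK) h.1⟩

theorem IsMinPSDForcingSet.exists_ssubset_of_adj_adj [Finite V] (hS : IsMinPSDForcingSet G S)
    (hC : IsWhiteComponent G S C) (hD : IsWhiteComponent G S D) (hCD : Disjoint C D) (hx : x ∈ S)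
    (hc : c ∈ C) (hxc : G.Adj x c) (hd : d ∈ D) (hxd : G.Adj x d) :
    ∃ S', IsMinPSDForcingSet G S' ∧ ∃ K, IsWhiteComponent G S' K ∧ C ⊂ K := by
  induction hn : D.ncard using Nat.strong_induction_on generalizing S D d with
  | _ n ih =>
  have hDC : ∀ ⦃a⦄, a ∈ D → a ∉ C := fun _ haD haC => Set.disjoint_left.1 hCD haC haD
  obtain ⟨u, v, hv, huv⟩ := Derives.exists_psdStep_mem hS.1 hD.1
    (Set.not_disjoint_iff.2 ⟨d, trivial, hd⟩)
  by_cases huC : ∃ e ∈ C, G.Adj u e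
  · obtain ⟨e, he, hue⟩ := huC
    exact ⟨_, hS.exchange huv, hC.exists_ssubset_exchange huv (hDC hv) he hue⟩
  by_cases hxD : ∀ w ∈ D, G.Adj x w → w = v
  · obtain rfl := hxD d hd hxd
    have hxv : PSDStep G S x d :=
      psdStep_iff_exists_isWhiteClosed.2 ⟨hx, hxd, D, hD.1, hd, hxD⟩
    exact ⟨_, hS.exchange hxv, hC.exists_ssubset_exchange hxv (hDC hd) hc hxc⟩
  push Not at huC hxD
  obtain ⟨w, hwD, hxw, hwv⟩ := hxD
  have hxu : x ≠ u := fun hxu => huC c hc (hxu ▸ hxc)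
  have hDv := hD.isWhiteClosed_sdiff_exchange huv hv
  have hw : w ∈ D \ {v} := ⟨hwD, hwv⟩
  obtain ⟨D', hD', hwD'⟩ := exists_isWhiteComponent_mem G (hDv.subset_compl hw)
  have hD'v : D' ⊆ D \ {v} := hDv.subset_of_connected hD'.connected hD'.subset_compl hwD' hw
  have hlt : D'.ncard < D.ncard :=
    (Set.ncard_le_ncard hD'v).trans_lt (Set.ncard_sdiff_singleton_lt_of_mem hv)
  exact ih _ (hn ▸ hlt) (hS.exchange huv) ⟨hC.1.exchange (hDC hv) huC, hC.connected⟩ hD'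
    (hCD.mono_right (hD'v.trans Set.sdiff_subset)) (Or.inr ⟨hx, hxu⟩) hwD' hxw rfl

end White

theorem exists_minPSD_with_larger_component_general {V : Type*} [Finite V] {G : SimpleGraph V}
    {S : Set V} (hS : IsMinPSDForcingSet G S) {a b : (Sᶜ : Set V)} (hG : G.Reachable a b)
    (hab : ¬ (G.induce Sᶜ).Reachable a b) :
    ∃ S' : Set V, IsMinPSDForcingSet G S' ∧ ∃ K : (G.induce S'ᶜ).ConnectedComponent,
      Subtype.val '' ((G.induce Sᶜ).connectedComponentMk a).supp ⊂ Subtype.val '' K.supp := by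
  have hC := isWhiteComponent_supp ((G.induce Sᶜ).connectedComponentMk a)
  set C := Subtype.val '' ((G.induce Sᶜ).connectedComponentMk a).supp
  have hbC : ↑b ∉ C := by
    rintro ⟨b', hb', hbb'⟩
    exact hab (ConnectedComponent.exact (Subtype.ext hbb' ▸ hb')).symm
  obtain ⟨x, hx, ⟨c, hc, hxc⟩, y, hyS, hyC, hxy⟩ :=
    hS.exists_adj_white_notMem hC.1 ⟨a, rfl, rfl⟩ hG b.2 hbC
  obtain ⟨D, hD, hyD⟩ := exists_isWhiteComponent_mem G hyS
  have hCD : Disjoint C D := Set.disjoint_left.2 fun _ hzC hzD =>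
    hyC (hC.eq_of_mem hD hzC hzD ▸ hyD)
  obtain ⟨S', hS', K, hK, hCK⟩ :=
    hS.exists_ssubset_of_adj_adj hC hD hCD hx hc hxc hyD hxy
  obtain ⟨K, rfl⟩ := hK.exists_supp_eq
  exact ⟨S', hS', K, hCK⟩

/-- If `G` is connected, `S` is a minimum positive semidefinite zero forcing set,
and `G − S` is disconnected, then for every component `C` of `G − S` there is
another minimum positive semidefinite zero forcing set `S'` such that `G − S'`
has a component `C'` properly containing `C`. -/
theorem exists_minPSD_with_larger_component {V : Type*} [Fintype V] (G : SimpleGraph V)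
    (hconn : G.Connected) (S : Set V) (hS : IsMinPSDForcingSet G S)
    (hdisc : ¬ (G.induce (Sᶜ : Set V)).Connected) :
    ∀ C : (G.induce (Sᶜ : Set V)).ConnectedComponent,
      ∃ S' : Set V, IsMinPSDForcingSet G S' ∧
        ∃ C' : (G.induce (S'ᶜ : Set V)).ConnectedComponent,
          (Subtype.val '' C.supp) ⊂ (Subtype.val '' C'.supp) := by
  refine ConnectedComponent.ind fun a => ?_
  obtain ⟨b, hab⟩ : ∃ b, ¬ (G.induce Sᶜ).Reachable a b := by
    by_contra! h
    exact hdisc ((connected_iff_exists_forall_reachable _).2 ⟨a, h⟩)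
  exact exists_minPSD_with_larger_component_general hS (hconn a b) hab
end

section
/- If T is a tree (a connected acyclic finite simple graph) with at least one vertex, then the positive semidefinite zero forcing number of T equals 1; that is, any single vertex of T forms a positive semidefinite zero forcing set. -/
open SimpleGraph

/-!
In an acyclic graph two distinct neighbors `v`, `w` of a vertex `u` are separated by `u`, because
the edge `uv` is a bridge. Hence for any blue set, every edge from a blue vertex to a white vertex
is a legal force. Connectedness supplies such an edge whenever some but not all vertices are blue,
so on a finite tree the forcing process cannot stop early.
-/

namespace Derives

variable {V : Type*} {step : Set V → V → V → Prop} {B S : Set V}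

theorem subset (h : Derives step B S) : B ⊆ S := by
  induction h with
  | refl => exact Set.Subset.rfl
  | tail _ _ ih => exact ih.trans (Set.subset_insert _ _)

theorem nonempty_of_nonempty (h : Derives step B S) (hstep : ∀ T u v, step T u v → T.Nonempty)
    (hS : S.Nonempty) : B.Nonempty := by
  induction h with
  | refl => exact hS
  | tail _ hforce ih => exact ih (hstep _ _ _ hforce)

theorem univ_of_forall_exists_step [Finite V]
    (h : ∀ S, Derives step B S → S ≠ Set.univ → ∃ u, ∃ v ∉ S, step S u v) :
    Derives step B Set.univ := by
  obtain ⟨S, hS⟩ := (Set.toFinite {S | Derives step B S}).exists_maximal ⟨B, refl B⟩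
  suffices S = Set.univ from this ▸ hS.prop
  by_contra hne
  obtain ⟨u, v, hv, hstep⟩ := h S hS.prop hne
  have hle : insert v S ⊆ S := hS.le_of_ge (tail hS.prop hstep) (Set.subset_insert v S)
  exact hv (hle (Set.mem_insert v S))

end Derives

section Graph

variable {V : Type*} {G : SimpleGraph V} {B S : Set V} {u v w : V}

theorem eq_of_isAcyclic_of_adj_of_adj_of_notMem_support (hG : G.IsAcyclic) (huv : G.Adj u v)
    (huw : G.Adj u w) (p : G.Walk v w) (hu : u ∉ p.support) : v = w := by
  have hbridge : G.IsBridge s(u, v) := isAcyclic_iff_forall_adj_isBridge.mp hG huv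
  have hmem : s(u, v) ∈ (Walk.cons huw p.reverse).edges :=
    isBridge_iff_forall_walk_mem_edges.mp hbridge _
  rw [Walk.edges_cons, List.mem_cons, Walk.edges_reverse, List.mem_reverse] at hmem
  rcases hmem with heq | hedge
  · exact Sym2.congr_right.mp heq
  · exact absurd (p.fst_mem_support_of_mem_edges hedge) hu

theorem exists_walk_support_subset_of_reachable_induce {s : Set V} {x y : s}
    (h : (G.induce s).Reachable x y) : ∃ p : G.Walk x y, ∀ z ∈ p.support, z ∈ s := by
  obtain ⟨q⟩ := h
  have hsupport : ∀ z ∈ (q.map (Embedding.induce s).toHom).support, z ∈ s := by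
    intro z hz
    rw [Walk.support_map, List.mem_map] at hz
    obtain ⟨z', -, rfl⟩ := hz
    exact z'.property
  exact ⟨_, hsupport⟩

theorem psdStep_of_isAcyclic (hG : G.IsAcyclic) (hu : u ∈ S) (hv : v ∉ S) (huv : G.Adj u v) :
    PSDStep G S u v := by
  refine ⟨hu, huv, hv, fun w _ huw hreach ↦ ?_⟩
  obtain ⟨p, hp⟩ := exists_walk_support_subset_of_reachable_induce hreach
  have hu_notMem : u ∉ p.support := fun hmem ↦ hp u hmem hu
  exact (eq_of_isAcyclic_of_adj_of_adj_of_notMem_support hG huv huw p hu_notMem).symm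

theorem exists_adj_mem_notMem_of_preconnected (hG : G.Preconnected) (hS : S.Nonempty)
    (hne : S ≠ Set.univ) : ∃ u ∈ S, ∃ v ∉ S, G.Adj u v := by
  obtain ⟨a, ha⟩ := hS
  obtain ⟨b, hb⟩ := (Set.ne_univ_iff_exists_notMem S).mp hne
  obtain ⟨p⟩ := hG a b
  obtain ⟨d, -, hfst, hsnd⟩ := p.exists_boundary_dart S ha hb
  exact ⟨d.fst, hfst, d.snd, hsnd, d.adj⟩

theorem isPSDForcingSet_of_nonempty [Finite V] (hconn : G.Preconnected) (hacyc : G.IsAcyclic)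
    (hB : B.Nonempty) : IsPSDForcingSet G B := by
  refine Derives.univ_of_forall_exists_step fun S hS hne ↦ ?_
  obtain ⟨u, hu, v, hv, huv⟩ :=
    exists_adj_mem_notMem_of_preconnected hconn (hB.mono hS.subset) hne
  exact ⟨u, v, hv, psdStep_of_isAcyclic hacyc hu hv huv⟩

theorem IsPSDForcingSet.nonempty [Nonempty V] (hB : IsPSDForcingSet G B) : B.Nonempty :=
  Derives.nonempty_of_nonempty hB (fun _ u _ hforce ↦ ⟨u, hforce.1⟩) Set.univ_nonempty

theorem Zplus_le_ncard (hB : IsPSDForcingSet G B) : Zplus G ≤ B.ncard :=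
  Nat.sInf_le ⟨B, hB, rfl⟩

theorem one_le_Zplus [Finite V] [Nonempty V] (G : SimpleGraph V) : 1 ≤ Zplus G := by
  refine le_csInf ⟨_, Set.univ, Derives.refl Set.univ, rfl⟩ ?_
  rintro _ ⟨B, hB, rfl⟩
  exact hB.nonempty.ncard_pos

end Graph

/-- For a tree `T` with at least one vertex, `Z₊(T) = 1`; indeed any single
vertex is a positive semidefinite zero forcing set. -/
theorem tree_Zplus_eq_one {V : Type*} [Fintype V] [Nonempty V] (T : SimpleGraph V)
    (hconn : T.Connected) (hacyc : T.IsAcyclic) :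
    Zplus T = 1 ∧ ∀ v : V, IsPSDForcingSet T {v} := by
  have forcing (v : V) : IsPSDForcingSet T {v} :=
    isPSDForcingSet_of_nonempty hconn.preconnected hacyc (Set.singleton_nonempty v)
  obtain ⟨v⟩ := ‹Nonempty V›
  have upper : Zplus T ≤ 1 := Set.ncard_singleton v ▸ Zplus_le_ncard (forcing v)
  exact ⟨upper.antisymm (one_le_Zplus T), forcing⟩
end
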